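/- Let G₁ and G₂ be nucleation-free graphs that are independent in ℝ³, with an implied non-edge {a₁,b₁} of G₁ and an implied non-edge {a₂,b₂} of G₂, each containing a triangle K₃ as a proper subgraph, and let G be a 3-sum of G₁ and G₂ obtained by identifying a triangle of G₁ with a triangle of G₂. If the shared triangle is not contained in any K₄ subgraph of G₁, or is not contained in any K₄ subgraph of G₂, then G is nucleation-free and independent in ℝ³; moreover, whenever the image of {a₁,b₁} (respectively {a₂,b₂}) is still a non-edge of G, it is an implied non-edge of G. -/

import Mathlib

/-!
The proof works with frameworks at which the rigidity rows of the edges are linearly independent;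
`G` is independent exactly when such a framework exists (`isIndependent_iff`).

*Independence of the 3-sum.* Linear independence of a set of rows survives, for all but finitely
many `t`, along the segment `p + t (q - p)`, since it is witnessed by a determinant that is a
nonzero polynomial in `t` (`finite_not_linearIndependent_add_smul`). Hence there is one framework
`p` of the glued vertex set at which the rows of `G₁` and the rows of `G₂` are both independent.
A vector in both row spaces is supported on the shared triangle, and it is an equilibrium force
there: its total force and total torque vanish. As the triangle is not collinear, such vectors form
a space of dimension at most 3 (`finrank_le_three`), so the rows of `G` span a space of dimension
at least `|E₁| + |E₂| - 3 = |E|`.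

*Nucleation.* In an independent graph a set of `n ≥ 3` vertices spans at most `3 n - 6` edges, with
equality exactly when the induced subgraph is rigid (`rankAt_le_of_three_le`, `ncard_edgesIn_le`).
If `S` spans a rigid subgraph of `G` on at least five vertices, let `S₁` and `S₂` be its traces
on the two sides. Counting edges with inclusion-exclusion (`count_eq_of_glue`) leaves only the case
that `S` contains the shared triangle and each `Sᵢ` has four vertices and six edges, that is, the
triangle lies in a `K₄` on both sides.

*Implied non-edges.* If `G₁ + ab` has the rank of `G₁`, it is dependent, hence so is the larger
graph `G + ab`; as `G` is independent, adding `ab` cannot raise its rank (`isImpliedNonEdge_map`).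
-/

open SimpleGraph

variable {V : Type*}

/-- The rigidity row of an (ordered) pair of vertices at a framework `p`. -/
def rigidityRow [DecidableEq V] (p : V → Fin 3 → ℝ) (i j : V) : V → Fin 3 → ℝ :=
  fun k => if k = i then p i - p j else if k = j then p j - p i else 0

/-- The rank of the rigidity rows of `G` at `p`. -/
noncomputable def rankAt [DecidableEq V] (G : SimpleGraph V) (p : V → Fin 3 → ℝ) : ℕ :=
  Module.finrank ℝ (Submodule.span ℝ
    {w : V → Fin 3 → ℝ | ∃ i j, G.Adj i j ∧ w = rigidityRow p i j})

/-- generic 3-dimensional rank of a graph. -/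
noncomputable def genRank [DecidableEq V] (G : SimpleGraph V) : ℕ :=
  sSup {n : ℕ | ∃ p : V → Fin 3 → ℝ, n = rankAt G p}

noncomputable def numEdges (G : SimpleGraph V) : ℕ := G.edgeSet.ncard

def IsIndependent [DecidableEq V] (G : SimpleGraph V) : Prop := genRank G = numEdges G

def NucleationFree [DecidableEq V] (G : SimpleGraph V) : Prop :=
  ∀ S : Finset V, 5 ≤ S.card → genRank (G.induce (S : Set V)) ≠ 3 * S.card - 6

def addEdge (G : SimpleGraph V) (x y : V) : SimpleGraph V :=
  G ⊔ SimpleGraph.fromEdgeSet {s(x, y)}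

def IsImpliedNonEdge [DecidableEq V] (G : SimpleGraph V) (x y : V) : Prop :=
  x ≠ y ∧ ¬ G.Adj x y ∧ genRank (addEdge G x y) = genRank G

/-- `G` (on vertex type `W`) is obtained by gluing `G₁` and `G₂` along the embeddings
`f` and `g`. -/
structure IsGlue {V₁ V₂ W : Type*} (G₁ : SimpleGraph V₁) (G₂ : SimpleGraph V₂)
    (G : SimpleGraph W) (f : V₁ → W) (g : V₂ → W) : Prop where
  f_inj : Function.Injective f
  g_inj : Function.Injective g
  cover : ∀ w, (∃ x, f x = w) ∨ (∃ y, g y = w)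
  adj_iff : ∀ w w', G.Adj w w' ↔
    ((∃ x x', f x = w ∧ f x' = w' ∧ G₁.Adj x x') ∨
     (∃ y y', g y = w ∧ g y' = w' ∧ G₂.Adj y y'))

/-! ### Linear algebra -/

open Matrix in
/-- Forces `x` at `a` and `y` at `b`, with a balancing force at the origin, have zero torque. If
the triangle is nondegenerate, such forces are determined by the three given dot products. -/
theorem crossProduct_rigid {a b x y : Fin 3 → ℝ} (hab : crossProduct a b ≠ 0)
    (h : crossProduct a x + crossProduct b y = 0)
    (h1 : a ⬝ᵥ x = 0) (h2 : b ⬝ᵥ x = 0) (h3 : b ⬝ᵥ y = 0) : x = 0 ∧ y = 0 := by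
  have e0 := congrFun h 0
  have e1 := congrFun h 1
  have e2 := congrFun h 2
  simp [cross_apply] at e0 e1 e2
  simp only [dotProduct, Fin.sum_univ_three] at h1 h2 h3
  -- `n` is the normal `a × b`; `x` is orthogonal to each of `a`, `b`, `n`.
  obtain ⟨n0, hn0⟩ : ∃ n, n = a 1 * b 2 - a 2 * b 1 := ⟨_, rfl⟩
  obtain ⟨n1, hn1⟩ : ∃ n, n = a 2 * b 0 - a 0 * b 2 := ⟨_, rfl⟩
  obtain ⟨n2, hn2⟩ : ∃ n, n = a 0 * b 1 - a 1 * b 0 := ⟨_, rfl⟩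
  have hn : n0 ^ 2 + n1 ^ 2 + n2 ^ 2 ≠ 0 := by
    intro h0
    have z0 : n0 = 0 := by nlinarith [sq_nonneg n0, sq_nonneg n1, sq_nonneg n2]
    have z1 : n1 = 0 := by nlinarith [sq_nonneg n0, sq_nonneg n1, sq_nonneg n2]
    have z2 : n2 = 0 := by nlinarith [sq_nonneg n0, sq_nonneg n1, sq_nonneg n2]
    apply hab
    rw [cross_apply, ← hn0, ← hn1, ← hn2, z0, z1, z2]
    ext i; fin_cases i <;> rfl
  have hnx : n0 * x 0 + n1 * x 1 + n2 * x 2 = 0 := by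
    subst hn0 hn1 hn2
    linear_combination -(b 0) * e0 - b 1 * e1 - b 2 * e2
  have x0 : x 0 = 0 := by
    apply (mul_eq_zero.mp _).resolve_left hn
    subst hn0 hn1 hn2
    linear_combination (b 1 * (a 0 * b 1 - a 1 * b 0) - b 2 * (a 2 * b 0 - a 0 * b 2)) * h1 +
      ((a 2 * b 0 - a 0 * b 2) * a 2 - (a 0 * b 1 - a 1 * b 0) * a 1) * h2 + (a 1 * b 2 - a 2 * b 1) * hnx
  have x1 : x 1 = 0 := by
    apply (mul_eq_zero.mp _).resolve_left hn
    subst hn0 hn1 hn2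
    linear_combination (b 2 * (a 1 * b 2 - a 2 * b 1) - b 0 * (a 0 * b 1 - a 1 * b 0)) * h1 +
      ((a 0 * b 1 - a 1 * b 0) * a 0 - (a 1 * b 2 - a 2 * b 1) * a 2) * h2 + (a 2 * b 0 - a 0 * b 2) * hnx
  have x2 : x 2 = 0 := by
    apply (mul_eq_zero.mp _).resolve_left hn
    subst hn0 hn1 hn2
    linear_combination (b 0 * (a 2 * b 0 - a 0 * b 2) - b 1 * (a 1 * b 2 - a 2 * b 1)) * h1 +
      ((a 1 * b 2 - a 2 * b 1) * a 1 - (a 2 * b 0 - a 0 * b 2) * a 0) * h2 + (a 0 * b 1 - a 1 * b 0) * hnx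
  have hx : x = 0 := by ext i; fin_cases i <;> assumption
  refine ⟨hx, ?_⟩
  simp only [x0, x1, x2] at e0 e1 e2
  have hb : b 0 ^ 2 + b 1 ^ 2 + b 2 ^ 2 ≠ 0 := by
    intro h0
    have z0 : b 0 = 0 := by nlinarith [sq_nonneg (b 0), sq_nonneg (b 1), sq_nonneg (b 2)]
    have z1 : b 1 = 0 := by nlinarith [sq_nonneg (b 0), sq_nonneg (b 1), sq_nonneg (b 2)]
    have z2 : b 2 = 0 := by nlinarith [sq_nonneg (b 0), sq_nonneg (b 1), sq_nonneg (b 2)]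
    apply hn
    rw [hn0, hn1, hn2, z0, z1, z2]; ring
  have y0 : y 0 = 0 := by
    apply (mul_eq_zero.mp _).resolve_left hb
    linear_combination b 0 * h3 - b 1 * e2 + b 2 * e1
  have y1 : y 1 = 0 := by
    apply (mul_eq_zero.mp _).resolve_left hb
    linear_combination b 1 * h3 - b 2 * e0 + b 0 * e2
  have y2 : y 2 = 0 := by
    apply (mul_eq_zero.mp _).resolve_left hb
    linear_combination b 2 * h3 - b 0 * e1 + b 1 * e0
  ext i; fin_cases i <;> assumption

/-- Linear independence persists along a line, except at finitely many parameters. -/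
theorem finite_not_linearIndependent_add_smul {ι E : Type*} [Finite ι] [AddCommGroup E]
    [Module ℝ E] {v : ι → E} (w : ι → E) (hv : LinearIndependent ℝ v) :
    {t : ℝ | ¬ LinearIndependent ℝ (fun i => v i + t • w i)}.Finite := by
  classical
  have := Fintype.ofFinite ι
  obtain ⟨L, hL⟩ := LinearMap.exists_leftInverse_of_injective (Fintype.linearCombination ℝ v)
    (LinearMap.ker_eq_bot.mpr hv.fintypeLinearCombination_injective)
  have hLv : ∀ i, L (v i) = Pi.single i 1 := fun i => by
    have := LinearMap.congr_fun hL (Pi.single i 1)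
    simpa using this
  -- In the coordinates given by `L`, the perturbed family has matrix `1 - t N`, whose determinant is
  -- a polynomial in `t` with value `1` at `0`.
  let N : Matrix ι ι ℝ := Matrix.of fun i j => -(L (w i) j)
  have hN : N.charpolyRev ≠ 0 := fun h => by
    have := Matrix.eval_charpolyRev (M := N)
    simp [h] at this
  refine (Polynomial.finite_setOfPred_isRoot hN).subset fun t ht => ?_
  by_contra hroot
  apply ht
  apply LinearIndependent.of_comp L
  have hdet : (1 - t • N).det ≠ 0 := by
    convert hroot using 1
    simp only [Set.mem_ofPred_eq, Polynomial.IsRoot]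
    rw [Matrix.charpolyRev, ← Polynomial.coe_evalRingHom, RingHom.map_det]
    congr! 2
    ext i j
    simp [Matrix.one_apply, apply_ite]
    exact mul_comm _ _
  have hrow : (L ∘ fun i => v i + t • w i) = (1 - t • N).row := by
    ext i j
    simp [hLv, N, Matrix.row, Pi.single_apply, Matrix.one_apply, eq_comm]
  rw [hrow]
  exact Matrix.linearIndependent_rows_iff_isUnit.mpr
    ((Matrix.isUnit_iff_isUnit_det _).mpr (isUnit_iff_ne_zero.mpr hdet))

/-! ### Rigidity rows and independence -/

section rows
variable [DecidableEq V]
theorem rigidityRow_comm (p : V → Fin 3 → ℝ) (i j : V) : rigidityRow p i j = rigidityRow p j i := by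
  ext k c
  unfold rigidityRow
  split_ifs <;> simp_all

/-- The rigidity row of an unordered pair; on a loop it vanishes. -/
def edgeRow (p : V → Fin 3 → ℝ) : Sym2 V → V → Fin 3 → ℝ :=
  Sym2.lift ⟨rigidityRow p, rigidityRow_comm p⟩

@[simp] theorem edgeRow_mk (p : V → Fin 3 → ℝ) (i j : V) :
    edgeRow p s(i, j) = rigidityRow p i j := rfl

theorem edgeRow_add_smul (p q : V → Fin 3 → ℝ) (t : ℝ) (e : Sym2 V) :
    edgeRow (p + t • q) e = edgeRow p e + t • edgeRow q e := by
  induction e with | _ i j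
  ext k c
  simp only [edgeRow_mk, rigidityRow, Pi.add_apply, Pi.smul_apply]
  split_ifs <;> simp <;> ring

theorem rankAt_eq (G : SimpleGraph V) (p : V → Fin 3 → ℝ) :
    rankAt G p = Module.finrank ℝ (Submodule.span ℝ (edgeRow p '' G.edgeSet)) := by
  have hset : {w : V → Fin 3 → ℝ | ∃ i j, G.Adj i j ∧ w = rigidityRow p i j} =
      edgeRow p '' G.edgeSet := by
    ext w
    constructor
    · rintro ⟨i, j, h, rfl⟩
      exact ⟨s(i, j), h, rfl⟩
    · rintro ⟨e, h, rfl⟩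
      induction e with | _ i j
      exact ⟨i, j, h, rfl⟩
  rw [rankAt, hset]

theorem ncard_eq_finrank_of_linearIndepOn {ι E : Type*} [Finite ι] [AddCommGroup E]
    [Module ℝ E] {v : ι → E} {s : Set ι} (h : LinearIndepOn ℝ v s) :
    Module.finrank ℝ (Submodule.span ℝ (v '' s)) = s.ncard := by
  have := Fintype.ofFinite s
  have := finrank_span_eq_card h
  rw [← Set.range_domRestrict] at *
  rw [← Nat.card_coe_set_eq, Nat.card_eq_fintype_card, ← this]
  rfl

theorem linearIndepOn_iff_ncard_le {ι E : Type*} [Finite ι] [AddCommGroup E]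
    [Module ℝ E] {v : ι → E} {s : Set ι} : LinearIndepOn ℝ v s ↔
      s.ncard ≤ Module.finrank ℝ (Submodule.span ℝ (v '' s)) := by
  have := Fintype.ofFinite s
  rw [LinearIndepOn, linearIndependent_iff_card_le_finrank_span, ← Nat.card_eq_fintype_card,
    Nat.card_coe_set_eq, Set.finrank, Set.image_eq_range]

theorem finrank_span_image_le_ncard {ι E : Type*} [Finite ι] [AddCommGroup E]
    [Module ℝ E] (v : ι → E) (s : Set ι) :
    Module.finrank ℝ (Submodule.span ℝ (v '' s)) ≤ s.ncard := by
  classical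
  have := Fintype.ofFinite (v '' s)
  refine (finrank_span_le_card _).trans ?_
  rw [← Set.ncard_eq_toFinset_card']
  exact Set.ncard_image_le

variable [Finite V]

theorem bddAbove_rankAt (G : SimpleGraph V) :
    BddAbove {n : ℕ | ∃ p : V → Fin 3 → ℝ, n = rankAt G p} := by
  refine ⟨numEdges G, ?_⟩
  rintro _ ⟨p, rfl⟩
  rw [rankAt_eq]
  exact finrank_span_image_le_ncard _ _

theorem rankAt_le_genRank (G : SimpleGraph V) (p : V → Fin 3 → ℝ) : rankAt G p ≤ genRank G :=
  le_csSup (bddAbove_rankAt G) ⟨p, rfl⟩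

theorem exists_rankAt_eq_genRank (G : SimpleGraph V) : ∃ p, rankAt G p = genRank G := by
  obtain ⟨p, hp⟩ := Nat.sSup_mem (s := {n : ℕ | ∃ p : V → Fin 3 → ℝ, n = rankAt G p})
    ⟨_, 0, rfl⟩ (bddAbove_rankAt G)
  exact ⟨p, hp.symm⟩

theorem genRank_le_numEdges (G : SimpleGraph V) : genRank G ≤ numEdges G := by
  obtain ⟨p, hp⟩ := exists_rankAt_eq_genRank G
  rw [← hp, rankAt_eq]
  exact finrank_span_image_le_ncard _ _

theorem isIndependent_iff (G : SimpleGraph V) :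
    IsIndependent G ↔ ∃ p, LinearIndepOn ℝ (edgeRow p) G.edgeSet := by
  constructor
  · intro h
    obtain ⟨p, hp⟩ := exists_rankAt_eq_genRank G
    refine ⟨p, linearIndepOn_iff_ncard_le.mpr ?_⟩
    rw [← rankAt_eq, hp, h, numEdges]
  · rintro ⟨p, hp⟩
    refine le_antisymm (genRank_le_numEdges G) ?_
    refine le_trans ?_ (rankAt_le_genRank G p)
    rw [rankAt_eq]
    exact linearIndepOn_iff_ncard_le.mp hp

/-- Two sets of pairs with independent rows at some frameworks have independent rows at a common
framework. -/
theorem exists_common_framework {A B : Set (Sym2 V)} {p q : V → Fin 3 → ℝ}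
    (hA : LinearIndepOn ℝ (edgeRow p) A) (hB : LinearIndepOn ℝ (edgeRow q) B) :
    ∃ r, LinearIndepOn ℝ (edgeRow r) A ∧ LinearIndepOn ℝ (edgeRow r) B := by
  have h1 := finite_not_linearIndependent_add_smul (fun e : A => edgeRow (q - p) e) hA
  have h2 := finite_not_linearIndependent_add_smul (fun e : B => edgeRow (p - q) e) hB
  have h3 := h2.preimage (f := fun t : ℝ => 1 - t) (sub_right_injective.injOn)
  obtain ⟨t, ht⟩ := (h1.union h3).infinite_compl.nonempty
  simp only [Set.mem_compl_iff, Set.mem_union, not_or, Set.mem_preimage, Set.mem_ofPred_eq,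
    not_not, ← edgeRow_add_smul] at ht
  refine ⟨p + t • (q - p), ht.1, ?_⟩
  have : p + t • (q - p) = q + (1 - t) • (p - q) := by module
  rw [this]
  exact ht.2

end rows

/-! ### Extending frameworks along an injection -/

section ext
variable {W : Type*}

/-- Extension by zero along `f` of vectors indexed by vertices. -/
noncomputable def extendZero (f : V → W) : (V → Fin 3 → ℝ) →ₗ[ℝ] (W → Fin 3 → ℝ) where
  toFun w := Function.extend f w (0 : W → Fin 3 → ℝ)
  map_add' x y := by
    simpa using Function.extend_add f x y (0 : W → Fin 3 → ℝ) (0 : W → Fin 3 → ℝ)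
  map_smul' c x := by
    simpa using Function.extend_smul c f x (0 : W → Fin 3 → ℝ)

theorem ker_extendZero {f : V → W} (hf : Function.Injective f) :
    LinearMap.ker (extendZero f) = ⊥ := by
  rw [LinearMap.ker_eq_bot]
  intro x y h
  exact Function.extend_injective hf (0 : W → Fin 3 → ℝ) h

variable [DecidableEq V] [DecidableEq W]

theorem edgeRow_map {f : V → W} (hf : Function.Injective f) (p : W → Fin 3 → ℝ) (e : Sym2 V) :
    edgeRow p (Sym2.map f e) = extendZero f (edgeRow (p ∘ f) e) := by
  induction e with | _ i j
  simp only [Sym2.map_mk, edgeRow_mk]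
  ext w : 1
  change _ = Function.extend f _ (0 : W → Fin 3 → ℝ) w
  by_cases hw : ∃ v, f v = w
  · obtain ⟨v, rfl⟩ := hw
    rw [hf.extend_apply]
    simp [rigidityRow, hf.eq_iff]
  · rw [Function.extend_apply' _ _ _ hw]
    have h1 : w ≠ f i := fun h => hw ⟨i, h.symm⟩
    have h2 : w ≠ f j := fun h => hw ⟨j, h.symm⟩
    simp [rigidityRow, h1, h2]

theorem linearIndepOn_edgeRow_map_iff {f : V → W} (hf : Function.Injective f)
    (p : W → Fin 3 → ℝ) (s : Set (Sym2 V)) :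
    LinearIndepOn ℝ (edgeRow p) (Sym2.map f '' s) ↔ LinearIndepOn ℝ (edgeRow (p ∘ f)) s := by
  have hc : edgeRow p ∘ Sym2.map f = extendZero f ∘ edgeRow (p ∘ f) :=
    funext fun e => edgeRow_map hf p e
  rw [← LinearMap.linearIndepOn_iff_of_injOn (extendZero f)
    (LinearMap.ker_eq_bot.mp (ker_extendZero hf)).injOn, ← hc]
  constructor
  · exact fun h => h.comp_of_image (Sym2.map.injective hf).injOn
  · intro h
    exact h.image_of_comp
end ext

/-! ### Equilibrium forces and the bound `3 n - 6` -/

section equilibrium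
variable [Fintype V]

/-- The equilibrium forces of a framework: the assignments of forces to the vertices with vanishing
total force and vanishing total torque. Equivalently, the annihilator of the infinitesimal isometries. -/
def equilibrium (p : V → Fin 3 → ℝ) : Submodule ℝ (V → Fin 3 → ℝ) where
  carrier := {w | ∑ v, w v = 0 ∧ ∑ v, crossProduct (p v) (w v) = 0}
  zero_mem' := by simp
  add_mem' := by
    rintro x y ⟨hx, hx'⟩ ⟨hy, hy'⟩
    simp [Finset.sum_add_distrib, hx, hx', hy, hy']
  smul_mem' := by
    rintro c x ⟨hx, hx'⟩
    simp [← Finset.smul_sum, hx, hx']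

theorem edgeRow_mem_equilibrium [DecidableEq V] (p : V → Fin 3 → ℝ) (e : Sym2 V) :
    edgeRow p e ∈ equilibrium p := by
  induction e with | _ i j
  have h : rigidityRow p i j = Pi.single i (p i - p j) - Pi.single j (p i - p j) := by
    ext k c
    by_cases hi : k = i <;> by_cases hj : k = j <;> simp_all [rigidityRow]
  rw [edgeRow_mk, h]
  have hcross : ∀ k : V, ∀ x : Fin 3 → ℝ,
      ∑ v, crossProduct (p v) ((Pi.single k x : V → Fin 3 → ℝ) v) = crossProduct (p k) x := fun k x => by
    rw [Finset.sum_eq_single k] <;> simp +contextual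
  constructor
  · simp
  · simp only [Pi.sub_apply, map_sub, Finset.sum_sub_distrib, hcross]
    simp [cross_self]

open Matrix in
/-- An equilibrium force is determined by its values off a noncollinear triple, together with three
coordinates on the triple. -/
theorem eq_zero_of_equilibrium [DecidableEq V] {p w : V → Fin 3 → ℝ} {i j k : V}
    (hp : crossProduct (p i - p k) (p j - p k) ≠ 0) (hw : w ∈ equilibrium p)
    (h0 : ∀ v, v ≠ i → v ≠ j → v ≠ k → w v = 0)
    (h1 : (p i - p k) ⬝ᵥ w i = 0) (h2 : (p j - p k) ⬝ᵥ w i = 0) (h3 : (p j - p k) ⬝ᵥ w j = 0) :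
    w = 0 := by
  have hij : i ≠ j := by rintro rfl; simp at hp
  have hik : i ≠ k := by rintro rfl; simp at hp
  have hjk : j ≠ k := by rintro rfl; simp at hp
  have hsum : ∀ F : V → Fin 3 → ℝ, (∀ v, v ≠ i → v ≠ j → v ≠ k → F v = 0) →
      ∑ v, F v = F i + F j + F k := fun F hF => by
    rw [← Finset.sum_subset (Finset.subset_univ {i, j, k})]
    · rw [Finset.sum_insert (by simp [hij, hik]), Finset.sum_pair hjk, add_assoc]
    · intro v _ hv
      simp only [Finset.mem_insert, Finset.mem_singleton, not_or] at hv
      exact hF v hv.1 hv.2.1 hv.2.2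
  obtain ⟨hw1, hw2⟩ := hw
  rw [hsum _ h0] at hw1
  rw [hsum _ (fun v a b c => by simp [h0 v a b c])] at hw2
  have hwk : w k = -(w i + w j) := by rw [eq_neg_iff_add_eq_zero, add_comm]; exact hw1
  have hcross : crossProduct (p i - p k) (w i) + crossProduct (p j - p k) (w j) = 0 := by
    rw [← hw2, hwk]
    simp only [map_sub, map_add, map_neg, LinearMap.sub_apply]
    abel
  obtain ⟨hi, hj⟩ := crossProduct_rigid hp hcross h1 h2 h3
  ext1 v
  by_cases a : v = i
  · rw [a, hi]; rfl
  by_cases b : v = j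
  · rw [b, hj]; rfl
  by_cases c : v = k
  · rw [c, hwk, hi, hj]; simp
  exact h0 v a b c

open Matrix in
/-- Three coordinates of a force assignment on the triple `i, j, k`; they determine any equilibrium
force supported on the triple when the triple is not collinear. -/
def pinCoords (p : V → Fin 3 → ℝ) (i j k : V) : (V → Fin 3 → ℝ) →ₗ[ℝ] (Fin 3 → ℝ) where
  toFun w := ![(p i - p k) ⬝ᵥ w i, (p j - p k) ⬝ᵥ w i, (p j - p k) ⬝ᵥ w j]
  map_add' x y := by ext c; fin_cases c <;> simp
  map_smul' r x := by ext c; fin_cases c <;> simp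

variable [DecidableEq V]

theorem finrank_le_three {p : V → Fin 3 → ℝ} {i j k : V}
    (hp : crossProduct (p i - p k) (p j - p k) ≠ 0) {D : Submodule ℝ (V → Fin 3 → ℝ)}
    (hD : D ≤ equilibrium p) (h0 : ∀ w ∈ D, ∀ v, v ≠ i → v ≠ j → v ≠ k → w v = 0) :
    Module.finrank ℝ D ≤ 3 := by
  have : Function.Injective ((pinCoords p i j k).comp D.subtype) := by
    rw [injective_iff_map_eq_zero]
    rintro ⟨w, hw⟩ h
    have e0 := congrFun h 0
    have e1 := congrFun h 1
    have e2 := congrFun h 2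
    exact Subtype.ext (eq_zero_of_equilibrium hp (hD hw) (h0 w hw) e0 e1 e2)
  simpa using LinearMap.finrank_le_finrank_of_injective this

theorem finrank_equilibrium_le {p : V → Fin 3 → ℝ} {i j k : V}
    (hp : crossProduct (p i - p k) (p j - p k) ≠ 0) :
    Module.finrank ℝ (equilibrium p) ≤ 3 * Fintype.card V - 6 := by
  have hij : i ≠ j := by rintro rfl; simp at hp
  have hik : i ≠ k := by rintro rfl; simp at hp
  have hjk : j ≠ k := by rintro rfl; simp at hp
  let F : (V → Fin 3 → ℝ) →ₗ[ℝ] (Fin 3 → ℝ) × ({v // v ∉ ({i, j, k} : Finset V)} → Fin 3 → ℝ) :=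
    (pinCoords p i j k).prod (LinearMap.funLeft ℝ (Fin 3 → ℝ) Subtype.val)
  have : Function.Injective (F.comp (equilibrium p).subtype) := by
    rw [injective_iff_map_eq_zero]
    rintro ⟨w, hw⟩ h
    have hf := congrArg Prod.fst h
    have e0 := congrFun hf 0
    have e1 := congrFun hf 1
    have e2 := congrFun hf 2
    refine Subtype.ext (eq_zero_of_equilibrium hp hw (fun v a b c => ?_) e0 e1 e2)
    exact congrFun (congrArg Prod.snd h) ⟨v, by simp [a, b, c]⟩
  refine (LinearMap.finrank_le_finrank_of_injective this).trans ?_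
  have hcard : ({i, j, k} : Finset V).card = 3 := Finset.card_eq_three.mpr ⟨i, j, k, hij, hik, hjk, rfl⟩
  have hc : Fintype.card {v // v ∉ ({i, j, k} : Finset V)} = Fintype.card V - 3 := by
    rw [Fintype.card_subtype_compl, Fintype.card_coe, hcard]
  have hpi : Module.finrank ℝ ({v // v ∉ ({i, j, k} : Finset V)} → Fin 3 → ℝ) =
      (Fintype.card V - 3) * 3 := by
    rw [Module.finrank_pi_fintype]
    simp only [Module.finrank_fin_fun, Finset.sum_const, Finset.card_univ, hc, smul_eq_mul]
  rw [Module.finrank_prod, hpi, Module.finrank_fin_fun]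
  have : 3 ≤ Fintype.card V := hcard ▸ Finset.card_le_univ _
  omega

theorem exists_smul_of_crossProduct {x y : Fin 3 → ℝ} (hx : x ≠ 0) (h : crossProduct x y = 0) :
    ∃ c : ℝ, y = c • x := by
  have e0 := congrFun h 0
  have e1 := congrFun h 1
  have e2 := congrFun h 2
  simp [cross_apply] at e0 e1 e2
  obtain ⟨m, hm⟩ := Function.ne_iff.mp hx
  refine ⟨y m / x m, ?_⟩
  ext n
  simp only [Pi.smul_apply, smul_eq_mul]
  field_simp [show x m ≠ 0 from hm]
  fin_cases m <;> fin_cases n <;> simp <;> linarith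

/-- The bound holds at every framework, including the collinear ones. -/
theorem rankAt_le_of_three_le (G : SimpleGraph V) (h3 : 3 ≤ Fintype.card V) (p : V → Fin 3 → ℝ) :
    rankAt G p ≤ 3 * Fintype.card V - 6 := by
  rw [rankAt_eq]
  by_cases hp : ∃ i j k, crossProduct (p i - p k) (p j - p k) ≠ 0
  · obtain ⟨i, j, k, hp⟩ := hp
    refine le_trans (Submodule.finrank_mono ?_) (finrank_equilibrium_le hp)
    rw [Submodule.span_le]
    rintro _ ⟨e, -, rfl⟩
    exact edgeRow_mem_equilibrium p e
  · push Not at hp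
    -- All points lie on a line with direction `d`, so every row is a multiple of `d` at each vertex
    -- and the rank is at most `|V|`, which is at most `3 |V| - 6`.
    obtain ⟨d, hd⟩ : ∃ d : Fin 3 → ℝ, ∀ i j, ∃ c : ℝ, p i - p j = c • d := by
      by_cases hc : ∃ i k, p i ≠ p k
      · obtain ⟨i, k, hik⟩ := hc
        have hk : ∀ j, ∃ c : ℝ, p j - p k = c • (p i - p k) := fun j =>
          exists_smul_of_crossProduct (sub_ne_zero.mpr hik) (hp i j k)
        refine ⟨p i - p k, fun a b => ?_⟩
        obtain ⟨ca, ha⟩ := hk a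
        obtain ⟨cb, hb⟩ := hk b
        exact ⟨ca - cb, by rw [sub_smul, ← ha, ← hb]; abel⟩
      · push Not at hc
        exact ⟨0, fun i j => ⟨0, by simp [hc i j]⟩⟩
    let F : (V → ℝ) →ₗ[ℝ] (V → Fin 3 → ℝ) :=
      LinearMap.pi fun v => (LinearMap.toSpanSingleton ℝ (Fin 3 → ℝ) d).comp (LinearMap.proj v)
    have hF : Submodule.span ℝ (edgeRow p '' G.edgeSet) ≤ LinearMap.range F := by
      rw [Submodule.span_le]
      rintro _ ⟨e, -, rfl⟩
      induction e with | _ i j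
      obtain ⟨c, hc⟩ := hd i j
      refine ⟨fun k => if k = i then c else if k = j then -c else 0, ?_⟩
      ext1 k
      simp only [F, LinearMap.pi_apply, LinearMap.comp_apply, LinearMap.proj_apply,
        LinearMap.toSpanSingleton_apply, edgeRow_mk, rigidityRow]
      split_ifs
      · exact hc.symm
      · rw [neg_smul, ← hc]; abel
      · simp
    have := (Submodule.finrank_mono hF).trans (LinearMap.finrank_range_le F)
    rw [Module.finrank_fintype_fun_eq_card] at this
    omega

omit [Fintype V] in
/-- A triangle whose three rows are independent is not collinear. -/
theorem crossProduct_ne_zero_of_triangle {p : V → Fin 3 → ℝ} {i j k : V} (hij : i ≠ j)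
    (hik : i ≠ k) (hjk : j ≠ k) {A : Set (Sym2 V)} (hA : LinearIndepOn ℝ (edgeRow p) A)
    (h : {s(i, j), s(i, k), s(j, k)} ⊆ A) : crossProduct (p i - p k) (p j - p k) ≠ 0 := by
  intro h0
  have hd : ∀ a b c : ℝ, a • rigidityRow p i j + b • rigidityRow p i k + c • rigidityRow p j k = 0 →
      a = 0 ∧ b = 0 ∧ c = 0 := by
    intro a b c habc
    have hB := hA.mono h
    have hB' : LinearIndepOn ℝ (edgeRow p) (({s(i, j), s(i, k), s(j, k)} : Finset (Sym2 V)) : Set (Sym2 V)) := by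
      simpa using hB
    rw [linearIndepOn_finset_iff] at hB'
    have := hB' (fun e => if e = s(i, j) then a else if e = s(i, k) then b else c) (by
      rw [Finset.sum_insert, Finset.sum_pair]
      · simpa [hij, hik, hjk, hij.symm, hik.symm, hjk.symm, add_assoc] using habc
      all_goals simp [hij, hik, hjk, hij.symm, hjk.symm])
    simpa [hij, hik, hjk, hij.symm, hik.symm, hjk.symm] using this
  by_cases hx : p i - p k = 0
  · have := hd 0 1 0 (by
      have h' : p k - p i = 0 := by rw [← neg_sub, hx, neg_zero]
      ext v c
      simp [rigidityRow, hx, h'])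
    simp at this
  obtain ⟨c, hc⟩ := exists_smul_of_crossProduct hx h0
  have hi : p i = p k + (p i - p k) := by abel
  have hj : p j = p k + c • (p i - p k) := by rw [← hc]; abel
  generalize p i - p k = d at hi hj
  -- On a line, `p j - p k = c (p i - p k)` gives an explicit dependency between the three rows.
  have := hd c (-(c * (1 - c))) (1 - c) (by
    ext v m
    by_cases vi : v = i
    · subst vi
      simp [rigidityRow, hij, hik, hi, hj]; ring
    by_cases vj : v = j
    · subst vj
      simp [rigidityRow, hij.symm, hjk, hi, hj]; ring
    by_cases vk : v = k
    · subst vk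
      simp [rigidityRow, hik.symm, hjk.symm, hi, hj]; ring
    simp [rigidityRow, vi, vj, vk])
  obtain ⟨a1, -, a2⟩ := this
  linarith

end equilibrium

/-! ### Counting edges of induced subgraphs -/

section counting

theorem edgeSet_addEdge (G : SimpleGraph V) {a b : V} (hab : a ≠ b) :
    (addEdge G a b).edgeSet = insert s(a, b) G.edgeSet := by
  rw [addEdge, SimpleGraph.edgeSet_sup, SimpleGraph.edgeSet_fromEdgeSet, Set.union_comm]
  ext e
  have he : e = s(a, b) → e ∉ Sym2.diagSet := by
    rintro rfl
    simpa using hab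
  simp only [Set.mem_union, Set.mem_sdiff, Set.mem_singleton_iff, Set.mem_insert_iff]
  tauto

theorem numEdges_addEdge [Finite V] (G : SimpleGraph V) {a b : V} (hab : a ≠ b)
    (h : ¬ G.Adj a b) : numEdges (addEdge G a b) = numEdges G + 1 := by
  rw [numEdges, edgeSet_addEdge G hab, Set.ncard_insert_of_notMem (by simpa using h), numEdges]

theorem numEdges_le_choose [Fintype V] (G : SimpleGraph V) :
    numEdges G ≤ (Fintype.card V).choose 2 := by
  classical
  rw [numEdges, ← SimpleGraph.coe_edgeFinset, Set.ncard_coe_finset]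
  exact SimpleGraph.card_edgeFinset_le_card_choose_two

/-- The edges of `G` with both ends in `S`. -/
def edgesIn (G : SimpleGraph V) (S : Finset V) : Set (Sym2 V) :=
  {e | e ∈ G.edgeSet ∧ ∀ v ∈ e, v ∈ S}

theorem mk_mem_edgesIn {G : SimpleGraph V} {S : Finset V} {a b : V} :
    s(a, b) ∈ edgesIn G S ↔ G.Adj a b ∧ a ∈ S ∧ b ∈ S := by
  simp [edgesIn]

theorem image_edgeSet_induce (G : SimpleGraph V) (S : Finset V) :
    Sym2.map Subtype.val '' (G.induce (S : Set V)).edgeSet = edgesIn G S := by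
  ext e
  induction e with | _ a b
  rw [mk_mem_edgesIn]
  constructor
  · rintro ⟨e, he, h⟩
    induction e with | _ x y
    have hxy : s((x : V), (y : V)) ∈ edgesIn G S := mk_mem_edgesIn.mpr ⟨he, x.2, y.2⟩
    rw [Sym2.map_mk] at h
    rw [h] at hxy
    exact mk_mem_edgesIn.mp hxy
  · rintro ⟨h, ha, hb⟩
    exact ⟨s(⟨a, ha⟩, ⟨b, hb⟩), h, rfl⟩

theorem numEdges_induce (G : SimpleGraph V) (S : Finset V) :
    numEdges (G.induce (S : Set V)) = (edgesIn G S).ncard := by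
  rw [numEdges, ← image_edgeSet_induce, Set.ncard_image_of_injective]
  exact Sym2.map.injective Subtype.val_injective

theorem ncard_edgesIn_le_choose (G : SimpleGraph V) (S : Finset V) :
    (edgesIn G S).ncard ≤ S.card.choose 2 := by
  rw [← numEdges_induce]
  exact (numEdges_le_choose _).trans_eq (by simp)

/-- Six edges on four vertices form a `K₄`. -/
theorem adj_of_ncard_edgesIn_eq_six {G : SimpleGraph V} {S : Finset V} (hS : S.card = 4)
    (h6 : (edgesIn G S).ncard = 6) {a b : V} (ha : a ∈ S) (hb : b ∈ S) (hab : a ≠ b) :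
    G.Adj a b := by
  by_contra h
  have h1 := numEdges_addEdge (G.induce (S : Set V)) (a := ⟨a, ha⟩) (b := ⟨b, hb⟩)
    (by simpa using hab) h
  have h2 := numEdges_le_choose (addEdge (G.induce (S : Set V)) ⟨a, ha⟩ ⟨b, hb⟩)
  rw [h1, numEdges_induce, h6] at h2
  have h3 : Fintype.card (S : Set V) = 4 := by simp [hS]
  rw [h3] at h2
  norm_num [Nat.choose] at h2

theorem exists_K4 {G : SimpleGraph V} {a b c : V} {S : Finset V} (hS : S.card = 4)
    (h6 : (edgesIn G S).ncard = 6) (ha : a ∈ S) (hb : b ∈ S) (hc : c ∈ S) :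
    ∃ z, G.Adj z a ∧ G.Adj z b ∧ G.Adj z c := by
  classical
  obtain ⟨z, hz, hzT⟩ := Finset.exists_mem_notMem_of_card_lt_card
    (s := {a, b, c}) (t := S) (lt_of_le_of_lt Finset.card_le_three (by omega))
  simp only [Finset.mem_insert, Finset.mem_singleton, not_or] at hzT
  exact ⟨z, adj_of_ncard_edgesIn_eq_six hS h6 hz ha hzT.1,
    adj_of_ncard_edgesIn_eq_six hS h6 hz hb hzT.2.1,
    adj_of_ncard_edgesIn_eq_six hS h6 hz hc hzT.2.2⟩

variable [DecidableEq V]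

theorem isIndependent_induce [Finite V] {G : SimpleGraph V} (hG : IsIndependent G)
    (S : Finset V) : IsIndependent (G.induce (S : Set V)) := by
  obtain ⟨p, hp⟩ := (isIndependent_iff G).mp hG
  refine (isIndependent_iff _).mpr ⟨p ∘ Subtype.val, ?_⟩
  rw [← linearIndepOn_edgeRow_map_iff Subtype.val_injective, image_edgeSet_induce]
  exact hp.mono fun e he => he.1

theorem ncard_edgesIn_le [Finite V] {G : SimpleGraph V} (hG : IsIndependent G) (S : Finset V)
    (hS : 3 ≤ S.card) : (edgesIn G S).ncard ≤ 3 * S.card - 6 := by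
  have h := isIndependent_induce hG S
  obtain ⟨p, hp⟩ := exists_rankAt_eq_genRank (G.induce (S : Set V))
  have hle := rankAt_le_of_three_le (G.induce (S : Set V)) (by simpa using hS) p
  rw [hp, h, numEdges_induce] at hle
  simpa using hle

/-- By independence, spanning exactly `3 n - 6` edges would make the induced subgraph rigid. -/
theorem ncard_edgesIn_ne [Finite V] {G : SimpleGraph V} (hG : IsIndependent G)
    (hnf : NucleationFree G) (S : Finset V) (hS : 5 ≤ S.card) :
    (edgesIn G S).ncard ≠ 3 * S.card - 6 := by
  rw [← numEdges_induce, ← isIndependent_induce hG S]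
  exact hnf S hS

/-- Implied non-edges of a subgraph stay implied in an independent supergraph. -/
theorem isImpliedNonEdge_map [Finite V] {W : Type*} [Finite W] [DecidableEq W]
    {G₁ : SimpleGraph V} {G : SimpleGraph W} {f : V → W} (hf : Function.Injective f)
    (hadj : ∀ x y, G₁.Adj x y → G.Adj (f x) (f y)) (h₁ : IsIndependent G₁)
    (hG : IsIndependent G) {a b : V} (himp : IsImpliedNonEdge G₁ a b)
    (hab : ¬ G.Adj (f a) (f b)) : IsImpliedNonEdge G (f a) (f b) := by
  obtain ⟨hne, hnadj, hrank⟩ := himp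
  have hne' := hf.ne hne
  refine ⟨hne', hab, ?_⟩
  have hle : genRank G ≤ genRank (addEdge G (f a) (f b)) := by
    obtain ⟨p, hp⟩ := exists_rankAt_eq_genRank G
    rw [← hp]
    refine le_trans ?_ (rankAt_le_genRank _ p)
    rw [rankAt_eq, rankAt_eq, edgeSet_addEdge G hne']
    exact Submodule.finrank_mono (Submodule.span_mono (Set.image_mono (Set.subset_insert _ _)))
  -- A larger rank could only be `|E| + 1`, which would make `G + ab`, hence `G₁ + ab`, independent.
  by_contra hlt
  have hindep : IsIndependent (addEdge G (f a) (f b)) := by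
    have := genRank_le_numEdges (addEdge G (f a) (f b))
    rw [numEdges_addEdge G hne' hab, ← hG] at this
    rw [IsIndependent, numEdges_addEdge G hne' hab, ← hG]
    omega
  obtain ⟨p, hp⟩ := (isIndependent_iff _).mp hindep
  have : IsIndependent (addEdge G₁ a b) := by
    refine (isIndependent_iff _).mpr ⟨p ∘ f, ?_⟩
    rw [← linearIndepOn_edgeRow_map_iff hf]
    refine hp.mono ?_
    rw [edgeSet_addEdge _ hne, edgeSet_addEdge _ hne', Set.image_insert_eq]
    refine Set.insert_subset_insert ?_
    rintro _ ⟨e, he, rfl⟩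
    induction e with | _ x y
    exact hadj x y he
  rw [IsIndependent, hrank, h₁, numEdges_addEdge _ hne hnadj] at this
  omega

end counting

/-! ### The 3-sum -/

section glue
variable {V₁ V₂ W : Type*} {G₁ : SimpleGraph V₁} {G₂ : SimpleGraph V₂} {G : SimpleGraph W}
  {f : V₁ → W} {g : V₂ → W}

theorem edgeSet_glue (h : IsGlue G₁ G₂ G f g) :
    G.edgeSet = Sym2.map f '' G₁.edgeSet ∪ Sym2.map g '' G₂.edgeSet := by
  ext e
  induction e with | _ a b
  rw [SimpleGraph.mem_edgeSet, h.adj_iff]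
  constructor
  · rintro (⟨x, y, rfl, rfl, hxy⟩ | ⟨x, y, rfl, rfl, hxy⟩)
    · exact Or.inl ⟨s(x, y), hxy, rfl⟩
    · exact Or.inr ⟨s(x, y), hxy, rfl⟩
  · rintro (⟨e, he, hab⟩ | ⟨e, he, hab⟩)
    all_goals
      induction e with | _ x y
      rw [Sym2.map_mk, Sym2.eq_iff] at hab
    · rcases hab with ⟨rfl, rfl⟩ | ⟨rfl, rfl⟩
      · exact Or.inl ⟨x, y, rfl, rfl, he⟩
      · exact Or.inl ⟨y, x, rfl, rfl, he.symm⟩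
    · rcases hab with ⟨rfl, rfl⟩ | ⟨rfl, rfl⟩
      · exact Or.inr ⟨x, y, rfl, rfl, he⟩
      · exact Or.inr ⟨y, x, rfl, rfl, he.symm⟩

theorem image_edgesIn {U : Type*} [Fintype U] [DecidableEq W] (H : SimpleGraph U) (k : U → W)
    (S : Finset W) : Sym2.map k '' edgesIn H {x | k x ∈ S} =
      {e | e ∈ Sym2.map k '' H.edgeSet ∧ ∀ v ∈ e, v ∈ S} := by
  ext e
  constructor
  · rintro ⟨e, ⟨he, hS⟩, rfl⟩
    refine ⟨⟨e, he, rfl⟩, fun v hv => ?_⟩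
    obtain ⟨x, hx, rfl⟩ := Sym2.mem_map.mp hv
    simpa using hS x hx
  · rintro ⟨⟨e, he, rfl⟩, hS⟩
    exact ⟨e, ⟨he, fun v hv => by simpa using hS _ (Sym2.mem_map.mpr ⟨v, hv, rfl⟩)⟩, rfl⟩

theorem edgesIn_glue [Fintype V₁] [Fintype V₂] [DecidableEq W] (h : IsGlue G₁ G₂ G f g)
    (S : Finset W) : edgesIn G S = Sym2.map f '' edgesIn G₁ {x | f x ∈ S} ∪
      Sym2.map g '' edgesIn G₂ {x | g x ∈ S} := by
  rw [image_edgesIn, image_edgesIn]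
  ext e
  simp only [edgesIn, edgeSet_glue h, Set.mem_ofPred_eq, Set.mem_union]
  tauto

theorem ncard_triangle {i j k : W} (hij : i ≠ j) (hik : i ≠ k) (hjk : j ≠ k) :
    ({s(i, j), s(i, k), s(j, k)} : Set (Sym2 W)).ncard = 3 :=
  Set.ncard_eq_three.mpr
    ⟨_, _, _, by simp [hjk, hik], by simp [hij, hik], by grind [Sym2.eq_iff], rfl⟩

/-- Vectors in the row space of an embedded graph vanish off the embedded vertices. -/
theorem span_edgeRow_map_apply_eq_zero [DecidableEq V] [DecidableEq W] {f : V → W}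
    (hf : Function.Injective f) {p : W → Fin 3 → ℝ} {E : Set (Sym2 V)} {w : W → Fin 3 → ℝ}
    (hw : w ∈ Submodule.span ℝ (edgeRow p '' (Sym2.map f '' E))) {v : W} (hv : ¬ ∃ x, f x = v) :
    w v = 0 := by
  have hle : Submodule.span ℝ (edgeRow p '' (Sym2.map f '' E)) ≤
      LinearMap.range (extendZero f) := by
    rw [Submodule.span_le]
    rintro _ ⟨_, ⟨e, -, rfl⟩, rfl⟩
    exact ⟨_, (edgeRow_map hf p e).symm⟩
  obtain ⟨x, rfl⟩ := hle hw
  exact Function.extend_apply' x (0 : W → Fin 3 → ℝ) v hv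

variable [Fintype V₁] [DecidableEq V₁] [Fintype V₂] [DecidableEq V₂] [Fintype W] [DecidableEq W]
  {t₁ t₂ t₃ : V₁} {u₁ u₂ u₃ : V₂}

theorem isIndependent_glue (h : IsGlue G₁ G₂ G f g)
    (h₁ : IsIndependent G₁) (h₂ : IsIndependent G₂)
    (ht : G₁.Adj t₁ t₂ ∧ G₁.Adj t₁ t₃ ∧ G₁.Adj t₂ t₃)
    (hu : G₂.Adj u₁ u₂ ∧ G₂.Adj u₁ u₃ ∧ G₂.Adj u₂ u₃)
    (hid : f t₁ = g u₁ ∧ f t₂ = g u₂ ∧ f t₃ = g u₃)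
    (honly : ∀ x y, f x = g y →
      (x = t₁ ∧ y = u₁) ∨ (x = t₂ ∧ y = u₂) ∨ (x = t₃ ∧ y = u₃)) : IsIndependent G := by
  obtain ⟨p₁, hp₁⟩ := (isIndependent_iff G₁).mp h₁
  obtain ⟨p₂, hp₂⟩ := (isIndependent_iff G₂).mp h₂
  rw [← Function.extend_comp h.f_inj p₁ (0 : W → Fin 3 → ℝ),
    ← linearIndepOn_edgeRow_map_iff h.f_inj] at hp₁
  rw [← Function.extend_comp h.g_inj p₂ (0 : W → Fin 3 → ℝ),
    ← linearIndepOn_edgeRow_map_iff h.g_inj] at hp₂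
  obtain ⟨p, hA, hB⟩ := exists_common_framework hp₁ hp₂
  refine (isIndependent_iff G).mpr ⟨p, linearIndepOn_iff_ncard_le.mpr ?_⟩
  have h12 := h.f_inj.ne ht.1.ne
  have h13 := h.f_inj.ne ht.2.1.ne
  have h23 := h.f_inj.ne ht.2.2.ne
  have hTA : {s(f t₁, f t₂), s(f t₁, f t₃), s(f t₂, f t₃)} ⊆ Sym2.map f '' G₁.edgeSet := by
    rintro _ (rfl | rfl | rfl)
    exacts [⟨s(t₁, t₂), ht.1, rfl⟩, ⟨s(t₁, t₃), ht.2.1, rfl⟩, ⟨s(t₂, t₃), ht.2.2, rfl⟩]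
  have hTB : {s(f t₁, f t₂), s(f t₁, f t₃), s(f t₂, f t₃)} ⊆ Sym2.map g '' G₂.edgeSet := by
    rw [hid.1, hid.2.1, hid.2.2]
    rintro _ (rfl | rfl | rfl)
    exacts [⟨s(u₁, u₂), hu.1, rfl⟩, ⟨s(u₁, u₃), hu.2.1, rfl⟩, ⟨s(u₂, u₃), hu.2.2, rfl⟩]
  have hcross := crossProduct_ne_zero_of_triangle h12 h13 h23 hA hTA
  rw [edgeSet_glue h, Set.image_union, Submodule.span_union]
  have hcard := Set.ncard_union_add_ncard_inter (Sym2.map f '' G₁.edgeSet)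
    (Sym2.map g '' G₂.edgeSet)
  have hinter := (ncard_triangle h12 h13 h23).symm.trans_le
    (Set.ncard_le_ncard (Set.subset_inter hTA hTB))
  -- `dim (U₁ + U₂) = |E₁| + |E₂| - dim (U₁ ∩ U₂)` for the two row spaces `U₁` and `U₂`.
  have hdim := Submodule.finrank_sup_add_finrank_inf_eq
    (Submodule.span ℝ (edgeRow p '' (Sym2.map f '' G₁.edgeSet)))
    (Submodule.span ℝ (edgeRow p '' (Sym2.map g '' G₂.edgeSet)))
  rw [ncard_eq_finrank_of_linearIndepOn hA, ncard_eq_finrank_of_linearIndepOn hB] at hdim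
  have hinf : Module.finrank ℝ
      (Submodule.span ℝ (edgeRow p '' (Sym2.map f '' G₁.edgeSet)) ⊓
        Submodule.span ℝ (edgeRow p '' (Sym2.map g '' G₂.edgeSet)) :
        Submodule ℝ (W → Fin 3 → ℝ)) ≤ 3 := by
    refine finrank_le_three hcross ?_ ?_
    · refine inf_le_left.trans (Submodule.span_le.mpr ?_)
      rintro _ ⟨e, -, rfl⟩
      exact edgeRow_mem_equilibrium p e
    · rintro w ⟨hwA, hwB⟩ v v1 v2 v3
      by_cases hvf : ∃ x, f x = v
      · refine span_edgeRow_map_apply_eq_zero h.g_inj hwB ?_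
        rintro ⟨y, rfl⟩
        obtain ⟨x, hx⟩ := hvf
        rcases honly x y hx with ⟨rfl, rfl⟩ | ⟨rfl, rfl⟩ | ⟨rfl, rfl⟩
        exacts [v1 hx.symm, v2 hx.symm, v3 hx.symm]
      · exact span_edgeRow_map_apply_eq_zero h.f_inj hwA hvf
  omega

omit [DecidableEq V₁] [DecidableEq V₂] [Fintype W] in
/-- Edges spanned by `S` that come from both sides: at least three if `S` contains the shared
triangle, and at least one if `S` contains exactly two of its vertices. -/
theorem ncard_edgesIn_inter_ge (f : V₁ → W) (hf : Function.Injective f)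
    (ht : G₁.Adj t₁ t₂ ∧ G₁.Adj t₁ t₃ ∧ G₁.Adj t₂ t₃)
    (hu : G₂.Adj u₁ u₂ ∧ G₂.Adj u₁ u₃ ∧ G₂.Adj u₂ u₃)
    (hid : f t₁ = g u₁ ∧ f t₂ = g u₂ ∧ f t₃ = g u₃) (S : Finset W) :
    ((({f t₁, f t₂, f t₃} : Finset W).filter (· ∈ S)).card = 3 →
      (f t₁ ∈ S ∧ f t₂ ∈ S ∧ f t₃ ∈ S) ∧
      3 ≤ (Sym2.map f '' edgesIn G₁ {x | f x ∈ S} ∩ Sym2.map g '' edgesIn G₂ {x | g x ∈ S}).ncard) ∧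
    ((({f t₁, f t₂, f t₃} : Finset W).filter (· ∈ S)).card = 2 →
      1 ≤ (Sym2.map f '' edgesIn G₁ {x | f x ∈ S} ∩ Sym2.map g '' edgesIn G₂ {x | g x ∈ S}).ncard) ∧
    (({f t₁, f t₂, f t₃} : Finset W).filter (· ∈ S)).card ≤ 3 := by
  have h12 := hf.ne ht.1.ne
  have h13 := hf.ne ht.2.1.ne
  have h23 := hf.ne ht.2.2.ne
  have key : ∀ {a b : V₁} {c d : V₂}, G₁.Adj a b → G₂.Adj c d → f a = g c → f b = g d →
      f a ∈ S → f b ∈ S → s(f a, f b) ∈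
        Sym2.map f '' edgesIn G₁ {x | f x ∈ S} ∩ Sym2.map g '' edgesIn G₂ {x | g x ∈ S} := by
    intro a b c d hab hcd hac hbd ha hb
    refine ⟨⟨s(a, b), mk_mem_edgesIn.mpr ⟨hab, by simpa using ha, by simpa using hb⟩, rfl⟩,
      ⟨s(c, d), mk_mem_edgesIn.mpr ⟨hcd, by simpa [← hac] using ha, by simpa [← hbd] using hb⟩, ?_⟩⟩
    rw [Sym2.map_mk, hac, hbd]
  have one : ∀ e, e ∈ Sym2.map f '' edgesIn G₁ {x | f x ∈ S} ∩
        Sym2.map g '' edgesIn G₂ {x | g x ∈ S} →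
      1 ≤ (Sym2.map f '' edgesIn G₁ {x | f x ∈ S} ∩
        Sym2.map g '' edgesIn G₂ {x | g x ∈ S}).ncard := fun e he =>
    (Set.ncard_pos).mpr ⟨e, he⟩
  by_cases m1 : f t₁ ∈ S <;> by_cases m2 : f t₂ ∈ S <;> by_cases m3 : f t₃ ∈ S <;>
    simp only [Finset.filter_insert, Finset.filter_singleton, m1, m2, m3, if_true, if_false]
  · have hT : ({s(f t₁, f t₂), s(f t₁, f t₃), s(f t₂, f t₃)} : Set (Sym2 W)) ⊆
        Sym2.map f '' edgesIn G₁ {x | f x ∈ S} ∩ Sym2.map g '' edgesIn G₂ {x | g x ∈ S} := by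
      rintro _ (rfl | rfl | rfl)
      exacts [key ht.1 hu.1 hid.1 hid.2.1 m1 m2, key ht.2.1 hu.2.1 hid.1 hid.2.2 m1 m3,
        key ht.2.2 hu.2.2 hid.2.1 hid.2.2 m2 m3]
    have h3 := (ncard_triangle h12 h13 h23).symm.trans_le (Set.ncard_le_ncard hT)
    have hc : ({f t₁, f t₂, f t₃} : Finset W).card = 3 :=
      Finset.card_eq_three.mpr ⟨_, _, _, h12, h13, h23, rfl⟩
    rw [hc]
    exact ⟨fun _ => ⟨⟨trivial, trivial, trivial⟩, h3⟩, by simp, le_rfl⟩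
  · simpa [h12, h13, h23] using one _ (key ht.1 hu.1 hid.1 hid.2.1 m1 m2)
  · simpa [h12, h13, h23] using one _ (key ht.2.1 hu.2.1 hid.1 hid.2.2 m1 m3)
  · simp
  · simpa [h12, h13, h23] using one _ (key ht.2.2 hu.2.2 hid.2.1 hid.2.2 m2 m3)
  all_goals simp

/-- Inclusion-exclusion for the traces of `S` on the two sides. -/
theorem card_glue (h : IsGlue G₁ G₂ G f g)
    (hid : f t₁ = g u₁ ∧ f t₂ = g u₂ ∧ f t₃ = g u₃)
    (honly : ∀ x y, f x = g y →
      (x = t₁ ∧ y = u₁) ∨ (x = t₂ ∧ y = u₂) ∨ (x = t₃ ∧ y = u₃)) (S : Finset W) :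
    let k := (({f t₁, f t₂, f t₃} : Finset W).filter (· ∈ S)).card
    let n₁ := ({x | f x ∈ S} : Finset V₁).card
    let n₂ := ({x | g x ∈ S} : Finset V₂).card
    S.card + k = n₁ + n₂ ∧ k ≤ n₁ ∧ k ≤ n₂ := by
  intro k n₁ n₂
  have hunion : S = ({x | f x ∈ S} : Finset V₁).image f ∪ ({x | g x ∈ S} : Finset V₂).image g := by
    ext w
    simp only [Finset.mem_union, Finset.mem_image, Finset.mem_filter, Finset.mem_univ, true_and]
    constructor
    · intro hw
      rcases h.cover w with ⟨x, rfl⟩ | ⟨x, rfl⟩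
      exacts [Or.inl ⟨x, hw, rfl⟩, Or.inr ⟨x, hw, rfl⟩]
    · rintro (⟨x, hx, rfl⟩ | ⟨x, hx, rfl⟩) <;> exact hx
  have hinter : ({f t₁, f t₂, f t₃} : Finset W).filter (· ∈ S) =
      ({x | f x ∈ S} : Finset V₁).image f ∩ ({x | g x ∈ S} : Finset V₂).image g := by
    ext w
    simp only [Finset.mem_inter, Finset.mem_image, Finset.mem_filter, Finset.mem_univ, true_and,
      Finset.mem_insert, Finset.mem_singleton]
    constructor
    · rintro ⟨rfl | rfl | rfl, hw⟩
      · exact ⟨⟨_, hw, rfl⟩, ⟨u₁, hid.1 ▸ hw, hid.1.symm⟩⟩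
      · exact ⟨⟨_, hw, rfl⟩, ⟨u₂, hid.2.1 ▸ hw, hid.2.1.symm⟩⟩
      · exact ⟨⟨_, hw, rfl⟩, ⟨u₃, hid.2.2 ▸ hw, hid.2.2.symm⟩⟩
    · rintro ⟨⟨x, hx, rfl⟩, ⟨y, hy, hxy⟩⟩
      refine ⟨?_, hx⟩
      rcases honly x y hxy.symm with ⟨rfl, rfl⟩ | ⟨rfl, rfl⟩ | ⟨rfl, rfl⟩ <;> simp
  have hn₁ : n₁ = _ := (Finset.card_image_of_injective _ h.f_inj).symm
  have hn₂ : n₂ = _ := (Finset.card_image_of_injective _ h.g_inj).symm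
  have hk : k = _ := congrArg Finset.card hinter
  refine ⟨?_, ?_, ?_⟩
  · have hcard := Finset.card_union_add_card_inter
      (({x | f x ∈ S} : Finset V₁).image f) (({x | g x ∈ S} : Finset V₂).image g)
    rw [← hunion] at hcard
    rw [hn₁, hn₂, hk, hcard]
  · rw [hk, hn₁]
    exact Finset.card_le_card Finset.inter_subset_left
  · rw [hk, hn₂]
    exact Finset.card_le_card Finset.inter_subset_right

/-- The edge count for a vertex set of size `n` with `e` edges, whose traces on the two sides have
sizes `nᵢ` and `eᵢ` edges, sharing `k` vertices of the triangle and `c` edges. -/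
theorem count_eq_of_glue {n n₁ n₂ k e e₁ e₂ c : ℕ} (hn : n + k = n₁ + n₂) (hk₁ : k ≤ n₁)
    (hk₂ : k ≤ n₂) (hk : k ≤ 3) (he : e + c = e₁ + e₂) (hc3 : k = 3 → 3 ≤ c) (hc2 : k = 2 → 1 ≤ c)
    (h5 : 5 ≤ n) (hge : 3 * n - 6 ≤ e)
    (b₁ : 3 ≤ n₁ → e₁ ≤ 3 * n₁ - 6) (b₂ : 3 ≤ n₂ → e₂ ≤ 3 * n₂ - 6)
    (c₁ : 5 ≤ n₁ → e₁ ≠ 3 * n₁ - 6) (c₂ : 5 ≤ n₂ → e₂ ≠ 3 * n₂ - 6)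
    (d₁ : e₁ ≤ n₁.choose 2) (d₂ : e₂ ≤ n₂.choose 2) :
    k = 3 ∧ n₁ = 4 ∧ e₁ = 6 ∧ n₂ = 4 ∧ e₂ = 6 := by
  have cases : ∀ {n e : ℕ}, (3 ≤ n → e ≤ 3 * n - 6) → (5 ≤ n → e ≠ 3 * n - 6) →
      e ≤ n.choose 2 → (n ≤ 1 ∧ e = 0) ∨ (n = 2 ∧ e ≤ 1) ∨ (n = 3 ∧ e ≤ 3) ∨
        (n = 4 ∧ e ≤ 6) ∨ (5 ≤ n ∧ e + 7 ≤ 3 * n) := by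
    intro n e b c d
    rcases lt_or_ge n 2 with h | h
    · rw [Nat.choose_eq_zero_of_lt h] at d
      omega
    · rcases h.eq_or_lt with rfl | h
      · norm_num at d
        omega
      · omega
  have h₁ := cases b₁ c₁ d₁
  have h₂ := cases b₂ c₂ d₂
  clear cases b₁ c₁ d₁ b₂ c₂ d₂
  have hge' : 3 * n ≤ e + 6 := by omega
  clear hge
  rcases h₁ with h₁ | h₁ | h₁ | h₁ | h₁ <;> rcases h₂ with h₂ | h₂ | h₂ | h₂ | h₂ <;> omega

theorem nucleationFree_glue (h : IsGlue G₁ G₂ G f g)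
    (h₁ : IsIndependent G₁) (h₂ : IsIndependent G₂)
    (hnf₁ : NucleationFree G₁) (hnf₂ : NucleationFree G₂)
    (ht : G₁.Adj t₁ t₂ ∧ G₁.Adj t₁ t₃ ∧ G₁.Adj t₂ t₃)
    (hu : G₂.Adj u₁ u₂ ∧ G₂.Adj u₁ u₃ ∧ G₂.Adj u₂ u₃)
    (hid : f t₁ = g u₁ ∧ f t₂ = g u₂ ∧ f t₃ = g u₃)
    (honly : ∀ x y, f x = g y →
      (x = t₁ ∧ y = u₁) ∨ (x = t₂ ∧ y = u₂) ∨ (x = t₃ ∧ y = u₃))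
    (hK4 : (¬ ∃ z, G₁.Adj z t₁ ∧ G₁.Adj z t₂ ∧ G₁.Adj z t₃) ∨
           (¬ ∃ z, G₂.Adj z u₁ ∧ G₂.Adj z u₂ ∧ G₂.Adj z u₃)) : NucleationFree G := by
  intro S hS hrank
  have hge := genRank_le_numEdges (G.induce (S : Set W))
  rw [hrank, numEdges_induce, edgesIn_glue h] at hge
  have hcard := Set.ncard_union_add_ncard_inter
    (Sym2.map f '' edgesIn G₁ {x | f x ∈ S}) (Sym2.map g '' edgesIn G₂ {x | g x ∈ S})
  obtain ⟨hk3, hk2, hk⟩ := ncard_edgesIn_inter_ge f h.f_inj ht hu hid S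
  obtain ⟨hn, hkn₁, hkn₂⟩ := card_glue h hid honly S
  rw [Set.ncard_image_of_injective _ (Sym2.map.injective h.f_inj),
    Set.ncard_image_of_injective _ (Sym2.map.injective h.g_inj)] at hcard
  have hfin := count_eq_of_glue hn hkn₁ hkn₂ hk hcard (fun h3 => (hk3 h3).2) hk2 hS hge
    (ncard_edgesIn_le h₁ _) (ncard_edgesIn_le h₂ _)
    (ncard_edgesIn_ne h₁ hnf₁ _) (ncard_edgesIn_ne h₂ hnf₂ _)
    (ncard_edgesIn_le_choose G₁ _) (ncard_edgesIn_le_choose G₂ _)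
  obtain ⟨e3, n₁, e₁, n₂, e₂⟩ := hfin
  obtain ⟨⟨m1, m2, m3⟩, -⟩ := hk3 e3
  rcases hK4 with hK | hK
  · exact hK (exists_K4 n₁ e₁ (by simpa using m1) (by simpa using m2) (by simpa using m3))
  · exact hK (exists_K4 n₂ e₂ (by simpa [← hid.1] using m1) (by simpa [← hid.2.1] using m2)
      (by simpa [← hid.2.2] using m3))

end glue

/-- **3-sums of nucleation-free independent graphs.**
If `G₁`, `G₂` are nucleation-free and independent in ℝ³ with implied non-edges
`{a₁,b₁}`, `{a₂,b₂}`, each containing a triangle as a proper subgraph, `G` is a 3-sum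
of `G₁` and `G₂` obtained by identifying a triangle `t₁t₂t₃` of `G₁` with a triangle
`u₁u₂u₃` of `G₂`, and the shared triangle extends to no `K₄` of `G₁` or to no `K₄` of
`G₂`, then `G` is nucleation-free and independent in ℝ³, and whenever the image of
`{a₁,b₁}` (resp. `{a₂,b₂}`) is still a non-edge of `G` it is an implied non-edge. -/
theorem three_sum {V₁ V₂ W : Type*}
    [Fintype V₁] [DecidableEq V₁] [Fintype V₂] [DecidableEq V₂]
    [Fintype W] [DecidableEq W]
    (G₁ : SimpleGraph V₁) (G₂ : SimpleGraph V₂) (G : SimpleGraph W)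
    (f : V₁ → W) (g : V₂ → W) (hglue : IsGlue G₁ G₂ G f g)
    (a₁ b₁ : V₁) (a₂ b₂ : V₂)
    (hnf₁ : NucleationFree G₁) (hind₁ : IsIndependent G₁)
    (himp₁ : IsImpliedNonEdge G₁ a₁ b₁)
    (hnf₂ : NucleationFree G₂) (hind₂ : IsIndependent G₂)
    (himp₂ : IsImpliedNonEdge G₂ a₂ b₂)
    (t₁ t₂ t₃ : V₁) (u₁ u₂ u₃ : V₂)
    -- the identified triangles
    (ht : G₁.Adj t₁ t₂ ∧ G₁.Adj t₁ t₃ ∧ G₁.Adj t₂ t₃)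
    (hu : G₂.Adj u₁ u₂ ∧ G₂.Adj u₁ u₃ ∧ G₂.Adj u₂ u₃)
    -- the triangles are proper subgraphs
    (hproper₁ : ∃ x, x ≠ t₁ ∧ x ≠ t₂ ∧ x ≠ t₃)
    (hproper₂ : ∃ y, y ≠ u₁ ∧ y ≠ u₂ ∧ y ≠ u₃)
    -- the gluing identifies exactly the two triangles, vertexwise
    (hid : f t₁ = g u₁ ∧ f t₂ = g u₂ ∧ f t₃ = g u₃)
    (honly : ∀ x y, f x = g y →
      (x = t₁ ∧ y = u₁) ∨ (x = t₂ ∧ y = u₂) ∨ (x = t₃ ∧ y = u₃))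
    -- the shared triangle is not contained in a K₄ of `G₁`, or not in a K₄ of `G₂`
    (hK4 : (¬ ∃ z, G₁.Adj z t₁ ∧ G₁.Adj z t₂ ∧ G₁.Adj z t₃) ∨
           (¬ ∃ z, G₂.Adj z u₁ ∧ G₂.Adj z u₂ ∧ G₂.Adj z u₃)) :
    NucleationFree G ∧ IsIndependent G ∧
      (¬ G.Adj (f a₁) (f b₁) → IsImpliedNonEdge G (f a₁) (f b₁)) ∧
      (¬ G.Adj (g a₂) (g b₂) → IsImpliedNonEdge G (g a₂) (g b₂)) := by
  have hG := isIndependent_glue hglue hind₁ hind₂ ht hu hid honly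
  refine ⟨nucleationFree_glue hglue hind₁ hind₂ hnf₁ hnf₂ ht hu hid honly hK4, hG, ?_, ?_⟩
  · exact isImpliedNonEdge_map hglue.f_inj
      (fun x y hxy => (hglue.adj_iff _ _).mpr (Or.inl ⟨x, y, rfl, rfl, hxy⟩)) hind₁ hG himp₁
  · exact isImpliedNonEdge_map hglue.g_inj
      (fun x y hxy => (hglue.adj_iff _ _).mpr (Or.inr ⟨x, y, rfl, rfl, hxy⟩)) hind₂ hG himp₂
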